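/- Let Θ be a finite set of states, R a finite set of receivers with |R| = n̄ ≥ 2, each r ∈ R with a finite action set A^r of cardinality at most ϱ, where ϱ ≥ 2, and utility u^r : A^r × Θ → [0,1]. Let 0 < ε ≤ 1, 0 < δ ≤ 1, p* ∈ Δ_Θ, and k = ⌈32·ln(4·n̄·ϱ/δ)/ε²⌉, and let γ̃ be the empirical distribution of k i.i.d. samples drawn from p*. Let f = {f_θ}_{θ∈Θ} with f_θ : Π_{r∈R} A^r → [0,1] be the sender's utility functions, let α ∈ (0,1], and let g be a function assigning to each pair (p, Z), where p ∈ Δ_Θ and Z = (Z^r)_{r∈R} is a tuple of nonempty subsets Z^r ⊆ A^r, an action profile g(p,Z) ∈ Π_r Z^r such that Σ_θ p_θ·f_θ(g(p,Z)) ≥ α · max_{a ∈ Π_r Z^r} Σ_θ p_θ·f_θ(a). Then E[ Σ_{θ∈Θ} γ̃_θ · f_θ( g(γ̃, M_ε(γ̃)) ) ] ≥ α·(1−δ) · max_{a ∈ Π_r M(p*)^r} Σ_{θ∈Θ} p*_θ · f_θ(a), where M(p) is the tuple whose r-th component is the set of actions a ∈ A^r maximizing Σ_θ p_θ·u^r(a,θ),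 and M_ε(p) is the tuple whose r-th component is {a ∈ A^r : Σ_θ p_θ·u^r(a,θ) ≥ Σ_θ p_θ·u^r(a',θ) − ε for all a' ∈ A^r}. -/

import Mathlib

open Finset

/-- The empirical distribution of a vector `s` of `k` samples from `Θ`:
`empDist s θ` is the fraction of samples equal to `θ`. -/
noncomputable def empDist {Θ : Type*} [Fintype Θ] [DecidableEq Θ] {k : ℕ}
    (s : Fin k → Θ) (θ : Θ) : ℝ :=
  ((Finset.univ.filter fun t => s t = θ).card : ℝ) / k

/-- The mean of `h` under the empirical distribution is the average of `h` over the samples. -/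
theorem sum_empDist_mul {Θ : Type*} [Fintype Θ] [DecidableEq Θ] {k : ℕ}
    (s : Fin k → Θ) (h : Θ → ℝ) :
    ∑ θ, empDist s θ * h θ = (∑ t, h (s t)) / k := by
  have hfiber : ∑ t, h (s t) = ∑ θ, ∑ t with s t = θ, h (s t) :=
    (Finset.sum_fiberwise _ _ _).symm
  rw [hfiber, Finset.sum_div]
  refine Finset.sum_congr rfl fun θ _ => ?_
  have hconst : ∑ t with s t = θ, h (s t) = ∑ t with s t = θ, h θ :=
    Finset.sum_congr rfl fun t ht => by rw [(Finset.mem_filter.1 ht).2]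
  rw [hconst, Finset.sum_const, nsmul_eq_mul, empDist]
  ring

theorem empDist_nonneg {Θ : Type*} [Fintype Θ] [DecidableEq Θ] {k : ℕ}
    (s : Fin k → Θ) (θ : Θ) : 0 ≤ empDist s θ := by
  unfold empDist
  positivity

theorem sum_empDist {Θ : Type*} [Fintype Θ] [DecidableEq Θ] {k : ℕ} (hk : 0 < k)
    (s : Fin k → Θ) : ∑ θ, empDist s θ = 1 := by
  have h := sum_empDist_mul s fun _ => 1
  have hk' : (k : ℝ) ≠ 0 := by positivity
  simpa [hk'] using h

/-- Under i.i.d. sampling, the expectation of `h` at one sample times a product of `q` over all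
samples factorizes. -/
theorem sum_prod_mul_apply_mul_prod {Θ : Type*} [Fintype Θ] [DecidableEq Θ] {k : ℕ}
    (p h q : Θ → ℝ) (i : Fin k) :
    ∑ s : Fin k → Θ, (∏ t, p (s t)) * (h (s i) * ∏ t, q (s t)) =
      (∑ θ, p θ * q θ * h θ) * (∑ θ, p θ * q θ) ^ (k - 1) := by
  have hterm (s : Fin k → Θ) : (∏ t, p (s t)) * (h (s i) * ∏ t, q (s t)) =
      ∏ t, p (s t) * q (s t) * (if t = i then h (s t) else 1) := by
    rw [Finset.prod_mul_distrib, Finset.prod_mul_distrib, Finset.prod_ite_eq' univ i]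
    simp only [Finset.mem_univ, if_true]
    ring
  simp_rw [hterm]
  rw [← Fintype.prod_sum fun (t : Fin k) θ => p θ * q θ * (if t = i then h θ else 1),
    ← Finset.mul_prod_erase univ _ (Finset.mem_univ i)]
  congr 1
  · simp
  · rw [Finset.prod_congr rfl (g := fun _ => ∑ θ, p θ * q θ)
      fun t ht => by simp [Finset.ne_of_mem_erase ht]]
    simp

/-- Under i.i.d. sampling, the expected empirical mean of `h` is the mean of `h`. -/
theorem sum_prod_mul_sum_empDist_mul {Θ : Type*} [Fintype Θ] [DecidableEq Θ] {k : ℕ}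
    (hk : 0 < k) {p : Θ → ℝ} (hp : ∑ θ, p θ = 1) (h : Θ → ℝ) :
    ∑ s : Fin k → Θ, (∏ t, p (s t)) * ∑ θ, empDist s θ * h θ = ∑ θ, p θ * h θ := by
  have hk' : (k : ℝ) ≠ 0 := by positivity
  have hone (i : Fin k) :
      ∑ s : Fin k → Θ, (∏ t, p (s t)) * h (s i) = ∑ θ, p θ * h θ := by
    simpa [hp] using sum_prod_mul_apply_mul_prod p h (fun _ => 1) i
  simp_rw [sum_empDist_mul, ← mul_div_assoc, ← Finset.sum_div, Finset.mul_sum]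
  rw [Finset.sum_comm, Finset.sum_congr rfl fun i _ => hone i]
  simp [hk']

/-- A bound on the moment generating function of a `[-1, 1]`-valued variable of nonpositive mean. -/
theorem sum_mul_exp_le {Θ : Type*} [Fintype Θ] {p v : Θ → ℝ} {l : ℝ}
    (hp0 : ∀ θ, 0 ≤ p θ) (hp1 : ∑ θ, p θ = 1) (hv : ∀ θ, |v θ| ≤ 1)
    (hmean : ∑ θ, p θ * v θ ≤ 0) (hl0 : 0 ≤ l) (hl1 : l ≤ 1) :
    ∑ θ, p θ * Real.exp (l * v θ) ≤ Real.exp (l ^ 2) := by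
  have hpoint (θ : Θ) : Real.exp (l * v θ) ≤ 1 + l * v θ + l ^ 2 := by
    have habs : |l * v θ| ≤ 1 := by
      rw [abs_mul, abs_of_nonneg hl0]
      exact mul_le_one₀ hl1 (abs_nonneg _) (hv θ)
    have hexp := (abs_le.1 (Real.abs_exp_sub_one_sub_id_le habs)).2
    have hsq : v θ ^ 2 ≤ 1 := (sq_le_one_iff_abs_le_one _).2 (hv θ)
    nlinarith [mul_le_mul_of_nonneg_left hsq (sq_nonneg l)]
  calc ∑ θ, p θ * Real.exp (l * v θ)
      ≤ ∑ θ, p θ * (1 + l * v θ + l ^ 2) :=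
        Finset.sum_le_sum fun θ _ => mul_le_mul_of_nonneg_left (hpoint θ) (hp0 θ)
    _ = ∑ θ, ((1 + l ^ 2) * p θ + l * (p θ * v θ)) :=
        Finset.sum_congr rfl fun θ _ => by ring
    _ = (1 + l ^ 2) + l * ∑ θ, p θ * v θ := by
        rw [Finset.sum_add_distrib, ← Finset.mul_sum, ← Finset.mul_sum, hp1, mul_one]
    _ ≤ l ^ 2 + 1 := by nlinarith
    _ ≤ Real.exp (l ^ 2) := Real.add_one_le_exp _

/-- A deviation bound weighted by the empirical mean of `h`: the contribution of the event that the
empirical mean of `v` exceeds `ε` is at most a small multiple of the mean of `h`. -/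
theorem sum_prod_mul_sum_empDist_mul_ite_le {Θ : Type*} [Fintype Θ] [DecidableEq Θ] {k : ℕ}
    (hk : 0 < k) {p v h : Θ → ℝ} {ε : ℝ} (hp0 : ∀ θ, 0 ≤ p θ) (hp1 : ∑ θ, p θ = 1)
    (hv : ∀ θ, |v θ| ≤ 1) (hmean : ∑ θ, p θ * v θ ≤ 0) (hh : ∀ θ, 0 ≤ h θ)
    (hε0 : 0 < ε) (hε1 : ε ≤ 1) :
    ∑ s : Fin k → Θ, (∏ t, p (s t)) * ((∑ θ, empDist s θ * h θ) *
        if ε < ∑ θ, empDist s θ * v θ then 1 else 0) ≤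
      Real.exp (1 - k * ε ^ 2 / 4) * ∑ θ, p θ * h θ := by
  have hk' : (0 : ℝ) < k := by exact_mod_cast hk
  have hmgf := sum_mul_exp_le (l := ε / 2) hp0 hp1 hv hmean (by linarith) (by linarith)
  have hweighted : ∑ θ, p θ * Real.exp (ε / 2 * v θ) * h θ ≤
      Real.exp 1 * ∑ θ, p θ * h θ := by
    rw [Finset.mul_sum]
    refine Finset.sum_le_sum fun θ _ => ?_
    have hexp : Real.exp (ε / 2 * v θ) ≤ Real.exp 1 :=
      Real.exp_le_exp.2 (by nlinarith [(abs_le.1 (hv θ)).2])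
    nlinarith [mul_le_mul_of_nonneg_left hexp (mul_nonneg (hp0 θ) (hh θ))]
  have hV : 0 ≤ ∑ θ, p θ * h θ := Finset.sum_nonneg fun θ _ => mul_nonneg (hp0 θ) (hh θ)
  have hmgf0 : 0 ≤ ∑ θ, p θ * Real.exp (ε / 2 * v θ) :=
    Finset.sum_nonneg fun θ _ => mul_nonneg (hp0 θ) (Real.exp_pos _).le
  have hind (s : Fin k → Θ) : (if ε < ∑ θ, empDist s θ * v θ then (1 : ℝ) else 0) ≤
      Real.exp (-(k * ε ^ 2 / 2)) * ∏ t, Real.exp (ε / 2 * v (s t)) := by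
    rw [← Real.exp_sum, ← Real.exp_add]
    split_ifs with hdev
    · rw [sum_empDist_mul, lt_div_iff₀ hk'] at hdev
      rw [← Finset.mul_sum]
      exact Real.one_le_exp (by nlinarith)
    · exact (Real.exp_pos _).le
  have hsample (i : Fin k) :
      ∑ s : Fin k → Θ, (∏ t, p (s t)) * (h (s i) * ∏ t, Real.exp (ε / 2 * v (s t))) ≤
        Real.exp (1 + k * ε ^ 2 / 4) * ∑ θ, p θ * h θ := by
    rw [sum_prod_mul_apply_mul_prod p h (fun θ => Real.exp (ε / 2 * v θ)) i]
    calc _ ≤ (Real.exp 1 * ∑ θ, p θ * h θ) * Real.exp ((ε / 2) ^ 2) ^ (k - 1) :=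
          mul_le_mul hweighted (pow_le_pow_left₀ hmgf0 hmgf _) (pow_nonneg hmgf0 _)
            (mul_nonneg (Real.exp_pos _).le hV)
      _ ≤ (Real.exp 1 * ∑ θ, p θ * h θ) * Real.exp ((ε / 2) ^ 2) ^ k :=
          mul_le_mul_of_nonneg_left
            (pow_le_pow_right₀ (Real.one_le_exp (sq_nonneg _)) (Nat.sub_le _ _))
            (mul_nonneg (Real.exp_pos _).le hV)
      _ = _ := by
          rw [← Real.exp_nat_mul, Real.exp_add,
            show (k : ℝ) * (ε / 2) ^ 2 = k * ε ^ 2 / 4 by ring]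
          ring
  calc _ ≤ ∑ s : Fin k → Θ, (∏ t, p (s t)) * ((∑ θ, empDist s θ * h θ) *
          (Real.exp (-(k * ε ^ 2 / 2)) * ∏ t, Real.exp (ε / 2 * v (s t)))) :=
        Finset.sum_le_sum fun s _ => mul_le_mul_of_nonneg_left
          (mul_le_mul_of_nonneg_left (hind s)
            (Finset.sum_nonneg fun θ _ => mul_nonneg (empDist_nonneg s θ) (hh θ)))
          (Finset.prod_nonneg fun t _ => hp0 _)
    _ = Real.exp (-(k * ε ^ 2 / 2)) / k * ∑ i : Fin k, ∑ s : Fin k → Θ,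
          (∏ t, p (s t)) * (h (s i) * ∏ t, Real.exp (ε / 2 * v (s t))) := by
        rw [Finset.sum_comm, Finset.mul_sum]
        refine Finset.sum_congr rfl fun s _ => ?_
        rw [sum_empDist_mul, ← Finset.mul_sum, ← Finset.sum_mul]
        ring
    _ ≤ Real.exp (-(k * ε ^ 2 / 2)) / k * ∑ _i : Fin k,
          Real.exp (1 + k * ε ^ 2 / 4) * ∑ θ, p θ * h θ :=
        mul_le_mul_of_nonneg_left (Finset.sum_le_sum fun i _ => hsample i) (by positivity)
    _ = _ := by
        rw [Finset.sum_const, Finset.card_univ, Fintype.card_fin, nsmul_eq_mul,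
          show 1 - (k : ℝ) * ε ^ 2 / 4 = -(k * ε ^ 2 / 2) + (1 + k * ε ^ 2 / 4) by ring,
          Real.exp_add (-(k * ε ^ 2 / 2))]
        field_simp

/-- With `32 * log (4 * N / δ) / ε ^ 2` samples, a union bound over `N` deviation events costs at
most `δ`. -/
theorem mul_exp_le_of_sample_size {N k ε δ : ℝ} (hN : 1 ≤ N) (hε : 0 < ε) (hδ0 : 0 < δ)
    (hδ1 : δ ≤ 1) (hk : 32 * Real.log (4 * N / δ) / ε ^ 2 ≤ k) :
    N * Real.exp (1 - k * ε ^ 2 / 4) ≤ δ := by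
  have hx : 1 ≤ 4 * N / δ := by rw [le_div_iff₀ hδ0]; linarith
  have hlog : 0 ≤ Real.log (4 * N / δ) := Real.log_nonneg hx
  rw [div_le_iff₀ (by positivity)] at hk
  calc N * Real.exp (1 - k * ε ^ 2 / 4)
      ≤ N * Real.exp (1 - Real.log (4 * N / δ)) := by
        have : 1 - k * ε ^ 2 / 4 ≤ 1 - Real.log (4 * N / δ) := by linarith
        gcongr
    _ = Real.exp 1 / 4 * δ := by
        rw [Real.exp_sub, Real.exp_log (by positivity)]
        field_simp
    _ ≤ δ := by nlinarith [Real.exp_one_lt_d9]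

/-- concluding lemma in the proof of Theorem 15, `th:qptas`.
Let `γ̃` be the empirical distribution of `k` i.i.d. samples from `pstar`, with
`k = ⌈32·ln(4 n̄ ϱ/δ)/ε²⌉`.  Let `g` be an `α`-approximate tie-breaking function:
for every posterior `p` and every tuple `Z` of nonempty action subsets, `g p Z` selects
an action profile in `Π_r Z^r` whose expected sender utility is at least `α` times that
of any profile in `Π_r Z^r`.  Then, letting the receivers `ε`-best respond to `γ̃` and
the sender use `g`, the expected sender utility is at least `α·(1−δ)` times the sender's
optimal expected utility at `pstar` over best responses to `pstar` (expressed as: at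
least `α·(1−δ)·∑_θ pstar θ · f θ a⋆` for every profile `a⋆` of best responses to
`pstar`).  The expectation is the sum over sample vectors `s : Fin k → Θ` of the
product weights `∏ t, pstar (s t)`; `M_ε(empDist s)` is the tuple of finsets of
`ε`-best responses to the empirical posterior. -/
theorem qptas_core
    {Θ R : Type*} [Fintype Θ] [DecidableEq Θ] [Nonempty Θ] [Fintype R]
    (A : R → Type*) [∀ r, Fintype (A r)] [∀ r, DecidableEq (A r)] [∀ r, Nonempty (A r)]
    (nbar ϱ : ℕ) (hcard : Fintype.card R = nbar) (hn2 : 2 ≤ nbar)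
    (hϱ : ∀ r, Fintype.card (A r) ≤ ϱ) (hϱ2 : 2 ≤ ϱ)
    (u : (r : R) → A r → Θ → ℝ)
    (hu : ∀ r (a : A r) (θ : Θ), u r a θ ∈ Set.Icc (0 : ℝ) 1)
    (ε δ : ℝ) (hε0 : 0 < ε) (hε1 : ε ≤ 1) (hδ0 : 0 < δ) (hδ1 : δ ≤ 1)
    (k : ℕ) (hk : k = ⌈32 * Real.log (4 * nbar * ϱ / δ) / ε ^ 2⌉₊)
    (pstar : Θ → ℝ) (hp0 : ∀ θ, 0 ≤ pstar θ) (hp1 : ∑ θ, pstar θ = 1)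
    (f : Θ → ((r : R) → A r) → ℝ)
    (hf : ∀ θ (a : (r : R) → A r), f θ a ∈ Set.Icc (0 : ℝ) 1)
    (α : ℝ) (hα : α ∈ Set.Ioc (0 : ℝ) 1)
    (g : (Θ → ℝ) → ((r : R) → Finset (A r)) → ((r : R) → A r))
    (hg : ∀ (p : Θ → ℝ) (Z : (r : R) → Finset (A r)),
      ((∀ θ, 0 ≤ p θ) ∧ ∑ θ, p θ = 1) → (∀ r, (Z r).Nonempty) →
      (∀ r, g p Z r ∈ Z r) ∧
      ∀ a : (r : R) → A r, (∀ r, a r ∈ Z r) →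
        α * ∑ θ, p θ * f θ a ≤ ∑ θ, p θ * f θ (g p Z)) :
    ∀ astar : (r : R) → A r,
      (∀ r (a' : A r), ∑ θ, pstar θ * u r a' θ ≤ ∑ θ, pstar θ * u r (astar r) θ) →
      α * (1 - δ) * ∑ θ, pstar θ * f θ astar ≤
        ∑ s : Fin k → Θ, (∏ t, pstar (s t)) *
          ∑ θ, empDist s θ *
            f θ (g (empDist s) fun r =>
              Finset.univ.filter fun a : A r =>
                ∀ a' : A r,
                  (∑ θ', empDist s θ' * u r a' θ') - ε ≤
                    ∑ θ', empDist s θ' * u r a θ') := by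
  intro astar hastar
  have hN : (1 : ℝ) ≤ nbar * ϱ := by
    exact_mod_cast Nat.one_le_iff_ne_zero.2 (by positivity)
  have hkceil : 32 * Real.log (4 * (nbar * ϱ) / δ) / ε ^ 2 ≤ (k : ℝ) := by
    rw [hk, ← mul_assoc]
    exact Nat.le_ceil _
  have hk0 : 0 < k := by
    have hlog : 0 < Real.log (4 * (nbar * ϱ) / δ) :=
      Real.log_pos (by rw [lt_div_iff₀ hδ0]; linarith)
    have hpos : 0 < 32 * Real.log (4 * (nbar * ϱ) / δ) / ε ^ 2 := by positivity
    exact_mod_cast hpos.trans_le hkceil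
  set V := ∑ θ, pstar θ * f θ astar
  have hV : 0 ≤ V := Finset.sum_nonneg fun θ _ => mul_nonneg (hp0 θ) (hf θ _).1
  let v (r : R) (a : A r) (θ : Θ) : ℝ := u r a θ - u r (astar r) θ
  let dev (r : R) (a : A r) (s : Fin k → Θ) : ℝ :=
    if ε < ∑ θ, empDist s θ * v r a θ then 1 else 0
  have hdev0 (r : R) (a : A r) (s : Fin k → Θ) : 0 ≤ dev r a s := by
    simp only [dev]
    split_ifs <;> norm_num
  have htail (r : R) (a : A r) :
      ∑ s : Fin k → Θ, (∏ t, pstar (s t)) * ((∑ θ, empDist s θ * f θ astar) * dev r a s) ≤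
        Real.exp (1 - k * ε ^ 2 / 4) * V := by
    refine sum_prod_mul_sum_empDist_mul_ite_le hk0 hp0 hp1 (fun θ => ?_) ?_
      (fun θ => (hf θ _).1) hε0 hε1
    · have h₁ := hu r a θ
      have h₂ := hu r (astar r) θ
      exact abs_le.2 ⟨by linarith [h₁.1, h₂.2], by linarith [h₁.2, h₂.1]⟩
    · simp only [v, mul_sub, Finset.sum_sub_distrib]
      linarith [hastar r a]
  have hunion : ∑ r, ∑ a : A r, ∑ s : Fin k → Θ,
      (∏ t, pstar (s t)) * ((∑ θ, empDist s θ * f θ astar) * dev r a s) ≤ δ * V := by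
    calc _ ≤ ∑ r : R, ∑ _a : A r, Real.exp (1 - k * ε ^ 2 / 4) * V :=
          Finset.sum_le_sum fun r _ => Finset.sum_le_sum fun a _ => htail r a
      _ ≤ ∑ _r : R, ϱ * (Real.exp (1 - k * ε ^ 2 / 4) * V) := by
          refine Finset.sum_le_sum fun r _ => ?_
          rw [Finset.sum_const, Finset.card_univ, nsmul_eq_mul]
          have hcardr : (Fintype.card (A r) : ℝ) ≤ ϱ := by exact_mod_cast hϱ r
          gcongr
      _ = nbar * ϱ * Real.exp (1 - k * ε ^ 2 / 4) * V := by
          rw [Finset.sum_const, Finset.card_univ, hcard, nsmul_eq_mul]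
          ring
      _ ≤ δ * V := by
          gcongr
          exact mul_exp_le_of_sample_size hN hε0 hδ0 hδ1 hkceil
  have hsplit : ∑ s : Fin k → Θ, (∏ t, pstar (s t)) *
      (α * ((∑ θ, empDist s θ * f θ astar) * (1 - ∑ r, ∑ a : A r, dev r a s))) =
      α * (V - ∑ r, ∑ a : A r, ∑ s : Fin k → Θ,
        (∏ t, pstar (s t)) * ((∑ θ, empDist s θ * f θ astar) * dev r a s)) := by
    have hswap : ∑ r, ∑ a : A r, ∑ s : Fin k → Θ,
        (∏ t, pstar (s t)) * ((∑ θ, empDist s θ * f θ astar) * dev r a s) =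
        ∑ s : Fin k → Θ, (∏ t, pstar (s t)) *
          ((∑ θ, empDist s θ * f θ astar) * ∑ r, ∑ a : A r, dev r a s) := by
      rw [Finset.sum_congr rfl fun r _ => Finset.sum_comm, Finset.sum_comm]
      exact Finset.sum_congr rfl fun s _ => by simp only [Finset.mul_sum]
    have hmean : ∑ s : Fin k → Θ, (∏ t, pstar (s t)) * ∑ θ, empDist s θ * f θ astar = V :=
      sum_prod_mul_sum_empDist_mul hk0 hp1 fun θ => f θ astar
    rw [hswap, ← hmean, ← Finset.sum_sub_distrib, Finset.mul_sum]
    exact Finset.sum_congr rfl fun s _ => by ring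
  calc α * (1 - δ) * V ≤ α * (V - ∑ r, ∑ a : A r, ∑ s : Fin k → Θ,
        (∏ t, pstar (s t)) * ((∑ θ, empDist s θ * f θ astar) * dev r a s)) := by
        rw [mul_assoc]
        exact mul_le_mul_of_nonneg_left (by linarith) hα.1.le
    _ = _ := hsplit.symm
    _ ≤ _ := by
      refine Finset.sum_le_sum fun s _ =>
        mul_le_mul_of_nonneg_left ?_ (Finset.prod_nonneg fun t _ => hp0 _)
      have hemp : 0 ≤ ∑ θ, empDist s θ * f θ astar :=
        Finset.sum_nonneg fun θ _ => mul_nonneg (empDist_nonneg s θ) (hf θ _).1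
      by_cases hgood : ∀ r (a : A r), ∑ θ, empDist s θ * v r a θ ≤ ε
      · have hbest (r : R) : astar r ∈ Finset.univ.filter fun a : A r => ∀ a' : A r,
            (∑ θ', empDist s θ' * u r a' θ') - ε ≤ ∑ θ', empDist s θ' * u r a θ' := by
          refine Finset.mem_filter.2 ⟨Finset.mem_univ _, fun a' => ?_⟩
          have h := hgood r a'
          simp only [v, mul_sub, Finset.sum_sub_distrib] at h
          linarith
        have hzero : ∑ r, ∑ a : A r, dev r a s = 0 :=
          Finset.sum_eq_zero fun r _ => Finset.sum_eq_zero fun a _ =>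
            if_neg (not_lt.2 (hgood r a))
        rw [hzero, sub_zero, mul_one]
        exact (hg (empDist s) _ ⟨empDist_nonneg s, sum_empDist hk0 s⟩
          fun r => ⟨_, hbest r⟩).2 astar hbest
      · push Not at hgood
        obtain ⟨r, a, hra⟩ := hgood
        have hone : 1 ≤ ∑ r, ∑ a : A r, dev r a s :=
          calc (1 : ℝ) = dev r a s := (if_pos hra).symm
            _ ≤ ∑ a : A r, dev r a s :=
              Finset.single_le_sum (fun a _ => hdev0 r a s) (Finset.mem_univ a)
            _ ≤ _ := Finset.single_le_sum (f := fun r => ∑ a : A r, dev r a s)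
              (fun r _ => Finset.sum_nonneg fun a _ => hdev0 r a s) (Finset.mem_univ r)
        exact (mul_nonpos_of_nonneg_of_nonpos hα.1.le
          (mul_nonpos_of_nonneg_of_nonpos hemp (by linarith))).trans
          (Finset.sum_nonneg fun θ _ => mul_nonneg (empDist_nonneg s θ) (hf θ _).1)
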